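/- Let X and Y be realcompact completely regular Hausdorff topological spaces, let E and F be nonzero normed spaces over 𝕂 with E finite-dimensional, let T : C(X,E) → C(Y,F) be a 𝕂-linear biseparating map, and for each y ∈ Y define J_y : E → F by J_y(e) = (T ê)(y). Then each J_y is a continuous 𝕂-linear bijection from E onto F, and the map y ↦ J_y is continuous from Y into the space of continuous linear bijections from E onto F endowed with the strong operator topology; equivalently, for each e ∈ E the map y ↦ J_y(e) is continuous on Y. -/

import Mathlib

open Filter Topology

/-- A topological space is realcompact if it admits a closed topological embedding
into a product `ℝ^ι` of copies of `ℝ`. -/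
def Realcompact (X : Type) [TopologicalSpace X] : Prop :=
  ∃ (ι : Type) (e : X → ι → ℝ), IsClosedEmbedding e

/-- A map between spaces of continuous vector-valued functions is separating if it maps
pairs of functions with disjoint cozero sets to pairs of functions with disjoint cozero sets. -/
def SeparatingC {X Y E F : Type} [TopologicalSpace X] [TopologicalSpace Y]
    [NormedAddCommGroup E] [NormedAddCommGroup F] (T : C(X, E) → C(Y, F)) : Prop :=
  ∀ f g : C(X, E), (∀ x, ‖f x‖ * ‖g x‖ = 0) → ∀ y, ‖T f y‖ * ‖T g y‖ = 0

/-!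
The functional `f ↦ T f y` is concentrated on a filter `𝒮 y` on `X`, and since `T` is separating,
every bounded continuous real function converges along `𝒮 y`. The main point is that
`T (χ • g) y = 0` whenever `0 ≤ χ → 0` along `𝒮 y`. Otherwise, as `T⁻¹` is separating, there are
`z` arbitrarily close to `y` such that `χ` has an arbitrarily small limit `t > 0` along `𝒮 z`.
Take continuous functions `σ₀, σ₁` on the line such that near every `t > 0` one of them is
multiplication by an integer `n ≥ 1 / t`. Then `T ((σᵢ ∘ χ) • g) z = n • T (χ • g) z` for some
`i`, where `n` is arbitrarily large and `T (χ • g) z` is close to `T (χ • g) y ≠ 0`; this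
contradicts the continuity of `T ((σᵢ ∘ χ) • g)` at `y`.

Writing `f = (1 + φ)⁻¹ • ((1 + φ) • f)` shows that no `φ ≥ 0` tends to infinity along `𝒮 y`, so
`𝒮 y` converges to a point `x` by realcompactness. Writing `f = √‖f‖ • (f / √‖f‖)` shows that
`T f y = 0` whenever `f x = 0`, so `T f y = J_y (f x)` for all `f`, and the corresponding fact for
`T⁻¹` makes `J_y` bijective.
-/

lemma exists_continuous_cutoff {X : Type*} [TopologicalSpace X] (φ : C(X, ℝ)) {a b : ℝ}
    (hab : a < b) :
    ∃ τ : C(X, ℝ), (∀ x, φ x ≤ a → τ x = 0) ∧ ∀ x, b ≤ φ x → τ x = 1 := by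
  obtain ⟨τ, h0, h1, -⟩ := exists_continuous_zero_one_of_isClosed isClosed_Iic isClosed_Ici
    (Set.Iic_disjoint_Ici.2 hab.not_ge)
  exact ⟨τ.comp φ, fun x hx => h0 hx, fun x hx => h1 hx⟩

lemma exists_continuous_one_of_mem_nhds {Y : Type*} [TopologicalSpace Y]
    [CompletelyRegularSpace Y] {y : Y} {W : Set Y} (hW : W ∈ 𝓝 y) :
    ∃ χ : C(Y, ℝ), χ y = 1 ∧ ∀ z ∉ W, χ z = 0 := by
  obtain ⟨V, hVW, hV, hy⟩ := mem_nhds_iff.1 hW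
  obtain ⟨f, hf, h0, h1⟩ := CompletelyRegularSpace.completely_regular y Vᶜ
    hV.isClosed_compl (by simpa using hy)
  refine ⟨⟨fun z => 1 - (f z : ℝ), by fun_prop⟩, by simp [h0], fun z hz => ?_⟩
  have hfz : f z = 1 := h1 fun hzV => hz (hVW hzV)
  simp [hfz]

lemma continuous_inv_sqrt_norm_smul (E : Type*) [NormedAddCommGroup E] [NormedSpace ℝ E] :
    Continuous fun e : E => (√‖e‖)⁻¹ • e := by
  refine continuous_iff_continuousAt.2 fun e => ?_
  rcases eq_or_ne e 0 with rfl | he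
  · have hnorm (e : E) : ‖(√‖e‖)⁻¹ • e‖ = √‖e‖ := by
      rw [norm_smul, norm_inv, Real.norm_of_nonneg (Real.sqrt_nonneg _), inv_mul_eq_div,
        Real.div_sqrt]
    have hsqrt : Tendsto (fun e : E => √‖e‖) (𝓝 0) (𝓝 0) := by
      simpa using (continuous_norm.sqrt.tendsto (0 : E))
    rw [ContinuousAt, smul_zero]
    exact squeeze_zero_norm (fun e => (hnorm e).le) hsqrt
  · have : √‖e‖ ≠ 0 := Real.sqrt_ne_zero'.2 (norm_pos_iff.2 he)
    fun_prop (disch := assumption)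

lemma eq_zero_of_forall_frequently_nsmul {Y F ι : Type*} [TopologicalSpace Y]
    [NormedAddCommGroup F] [NormedSpace ℝ F] [Finite ι] {g : Y → F} {u : ι → Y → F} {y : Y}
    (hg : ContinuousAt g y) (hu : ∀ i, ContinuousAt (u i) y)
    (h : ∀ N : ℕ, ∃ᶠ z in 𝓝 y, ∃ i, ∃ n ≥ N, u i z = n • g z) : g y = 0 := by
  have := Fintype.ofFinite ι
  have hu' : ContinuousAt (fun z i => u i z) y := continuousAt_pi.2 hu
  have hbound (N : ℕ) : N * ‖g y‖ ≤ ‖fun i => u i y‖ := by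
    by_contra! hlt
    refine h N ?_
    filter_upwards [hu'.norm.eventually_lt (hg.norm.const_mul (N : ℝ)) hlt]
    rintro z hz ⟨i, n, hn, hin⟩
    refine hz.not_ge ?_
    calc N * ‖g z‖ ≤ n * ‖g z‖ := by gcongr
      _ = ‖u i z‖ := by rw [hin, RCLike.norm_nsmul ℝ, nsmul_eq_mul]
      _ ≤ ‖fun i => u i z‖ := norm_le_pi_norm (fun i => u i z) i
  by_contra hgy
  obtain ⟨N, hN⟩ := exists_nat_gt (‖fun i => u i y‖ / ‖g y‖)
  exact (hbound N).not_gt ((div_lt_iff₀ (norm_pos_iff.2 hgy)).1 hN)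

section Staircase

/-- The continuous staircase which rises from `n` to `n + 1` on `[n, n + 1/3]` and is equal to
`n + 1` on the rest of `[n, n + 1]`, for every integer `n`. Up to a bounded error it is the
identity, but it is locally constant away from the rises. -/
noncomputable def staircase (u : ℝ) : ℝ := ⌊u⌋ + min 1 (3 * Int.fract u)

lemma continuous_staircase : Continuous staircase := by
  have hper : Continuous ((fun t : ℝ => min 1 (3 * t) - t) ∘ Int.fract) := by
    apply ContinuousOn.comp_fract''
    · fun_prop
    · norm_num
  convert continuous_id.add hper using 1
  ext u
  have := Int.floor_add_fract u
  simp only [staircase, Pi.add_apply, id, Function.comp]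
  linarith

lemma abs_staircase_sub_le (u : ℝ) : |staircase u - u| ≤ 1 := by
  have hfloor := Int.floor_add_fract u
  have hnonneg := Int.fract_nonneg u
  have hlt := Int.fract_lt_one u
  have hmin : Int.fract u ≤ min 1 (3 * Int.fract u) := le_min hlt.le (by linarith)
  have hmin' := min_le_left 1 (3 * Int.fract u)
  rw [staircase, abs_le]
  constructor <;> linarith

lemma staircase_eventuallyEq {u : ℝ} (hu : 1 / 3 < Int.fract u) :
    staircase =ᶠ[𝓝 u] fun _ => ⌊u⌋ + 1 := by
  have hleft : (⌊u⌋ : ℝ) + 1 / 3 < u := by linarith [Int.floor_add_fract u]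
  filter_upwards [Ioo_mem_nhds hleft (Int.lt_floor_add_one u)] with v hv
  have hfloor : ⌊v⌋ = ⌊u⌋ := Int.floor_eq_iff.2 ⟨by linarith [hv.1], hv.2⟩
  rw [staircase, Int.fract, hfloor, min_eq_left (by linarith [hv.1])]

lemma exists_staircase_shift_eventuallyEq {u : ℝ} (hu : 0 ≤ u) :
    ∃ i : Fin 2, ∃ n : ℕ, u ≤ n ∧ ∀ᶠ v in 𝓝 u, staircase (v + i / 2) = n := by
  obtain ⟨i, hi⟩ : ∃ i : Fin 2, 1 / 3 < Int.fract (u + (i : ℝ) / 2) := by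
    by_cases h : 1 / 3 < Int.fract u
    · exact ⟨0, by simpa using h⟩
    · have hshift : Int.fract (u + 1 / 2) = Int.fract u + 1 / 2 :=
        Int.fract_eq_iff.2 ⟨by linarith [Int.fract_nonneg u], by linarith, ⌊u⌋,
          by linarith [Int.floor_add_fract u]⟩
      refine ⟨1, ?_⟩
      simp only [Fin.val_one, Nat.cast_one, hshift]
      linarith [Int.fract_nonneg u]
  have hpos : (0 : ℝ) ≤ (i : ℝ) / 2 := by positivity
  have hcast : ((⌊u + (i : ℝ) / 2⌋₊ + 1 : ℕ) : ℝ) = ⌊u + (i : ℝ) / 2⌋ + 1 := by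
    push_cast
    rw [natCast_floor_eq_intCast_floor (by linarith)]
  refine ⟨i, ⌊u + (i : ℝ) / 2⌋₊ + 1, ?_, ?_⟩
  · rw [hcast]
    linarith [Int.lt_floor_add_one (u + (i : ℝ) / 2)]
  · have htend : Tendsto (fun v : ℝ => v + (i : ℝ) / 2) (𝓝 u) (𝓝 (u + (i : ℝ) / 2)) :=
      (continuous_add_const _).tendsto u
    rw [hcast]
    exact htend.eventually (staircase_eventuallyEq hi)

/-- The functions `t ↦ t * staircase (t⁻¹ + i / 2)`, extended by `1` to `t = 0`, as continuous
functions on the line. They tend to `1` at `0`, but on the open intervals where the staircase is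
constant they are multiplication by a large integer, which an additive map preserves. -/
noncomputable def sawtooth (i : Fin 2) : C(ℝ, ℝ) where
  toFun t := 1 + t * (staircase (t⁻¹ + i / 2) - t⁻¹)
  continuous_toFun := by
    refine continuous_const.add (continuous_iff_continuousAt.2 fun t => ?_)
    rcases eq_or_ne t 0 with rfl | ht
    · have hbdd (u : ℝ) : |staircase (u + i / 2) - u| ≤ 1 + i / 2 := by
        calc |staircase (u + i / 2) - u|
            = |(staircase (u + i / 2) - (u + i / 2)) + i / 2| := by ring_nf
          _ ≤ |staircase (u + i / 2) - (u + i / 2)| + |(i / 2 : ℝ)| := abs_add_le _ _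
          _ ≤ 1 + i / 2 := by
            rw [abs_of_nonneg (by positivity : (0 : ℝ) ≤ i / 2)]
            gcongr
            exact abs_staircase_sub_le _
      have hlim : Tendsto (fun t : ℝ => t * (staircase (t⁻¹ + i / 2) - t⁻¹)) (𝓝 0) (𝓝 0) :=
        tendsto_id.zero_mul_isBoundedUnder_le
          (isBoundedUnder_of ⟨1 + i / 2, fun t => hbdd t⁻¹⟩)
      simpa [ContinuousAt] using hlim
    · have hstair := continuous_staircase
      fun_prop (disch := assumption)

lemma exists_sawtooth_eventuallyEq {t : ℝ} (ht : 0 < t) :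
    ∃ i, ∃ n : ℕ, t⁻¹ ≤ n ∧ ∀ᶠ s in 𝓝 t, sawtooth i s = n * s := by
  obtain ⟨i, n, hn, hconst⟩ := exists_staircase_shift_eventuallyEq (inv_pos.2 ht).le
  refine ⟨i, n, hn, ?_⟩
  filter_upwards [(tendsto_inv₀ ht.ne').eventually hconst, eventually_ne_nhds ht.ne'] with s hs hs0
  simp only [sawtooth, ContinuousMap.coe_mk, hs]
  field_simp
  ring

end Staircase

section SupportFilter

variable {X Y E F G : Type*} [TopologicalSpace X] [TopologicalSpace Y]
  [NormedAddCommGroup E] [NormedSpace ℝ E] [NormedAddCommGroup F]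
  [FunLike G C(X, E) C(Y, F)] [AddMonoidHomClass G C(X, E) C(Y, F)]

/-- The filter of sets `A` outside of which `f` can be changed without affecting `T f y`. It plays
the role of the support point of the functional `f ↦ T f y` before that point is known to exist.
The definition asks for a continuous function that cuts off to the complement of `A` and is
annihilated by the functional, so that the intersection axiom is an algebraic identity. -/
def supportFilter (T : G) (y : Y) : Filter X where
  sets := {A | ∃ χ : C(X, ℝ), (∀ x ∉ A, χ x = 1) ∧ ∀ f : C(X, E), T (χ • f) y = 0}
  univ_sets := ⟨0, by simp, fun f => by simp [map_zero T]⟩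
  sets_of_superset := by
    rintro A B ⟨χ, hχ, hT⟩ hAB
    exact ⟨χ, fun x hx => hχ x fun hA => hx (hAB hA), hT⟩
  inter_sets := by
    rintro A B ⟨χ, hχ, hT⟩ ⟨ψ, hψ, hT'⟩
    refine ⟨χ + ψ - χ * ψ, fun x hx => ?_, fun f => ?_⟩
    · by_cases hA : x ∈ A
      · simp [hψ x fun hB => hx ⟨hA, hB⟩]
      · simp [hχ x hA]
    · simp [sub_smul, add_smul, mul_smul, map_sub T, map_add T, hT, hT']

lemma apply_eq_of_eventuallyEq_supportFilter {T : G} {y : Y} {f g : C(X, E)}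
    (h : f =ᶠ[supportFilter T y] g) : T f y = T g y := by
  obtain ⟨χ, hχ, hT⟩ := h
  have hfg : χ • (f - g) = f - g := by
    ext x
    by_cases hx : f x = g x
    · simp [ContinuousMap.smul_apply', hx]
    · simp [ContinuousMap.smul_apply', hχ x hx]
  simpa [hfg, map_sub T, sub_eq_zero] using hT (f - g)

lemma apply_eq_zero_of_eventually_supportFilter {T : G} {y : Y} {f : C(X, E)}
    (h : ∀ᶠ x in supportFilter T y, f x = 0) : T f y = 0 := by
  simpa [map_zero T] using apply_eq_of_eventuallyEq_supportFilter (T := T) (g := 0) h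

lemma supportFilter_neBot {T : G} {y : Y} {f : C(X, E)} (hf : T f y ≠ 0) :
    (supportFilter T y).NeBot :=
  ⟨fun hbot => hf (apply_eq_zero_of_eventually_supportFilter (by simp [hbot]))⟩

lemma exists_apply_sawtooth_comp_smul_eq_nsmul {T : G} {y : Y} {χ : C(X, ℝ)} {t : ℝ} (ht : 0 < t)
    (hχ : Tendsto χ (supportFilter T y) (𝓝 t)) (g : C(X, E)) :
    ∃ i, ∃ n : ℕ, t⁻¹ ≤ n ∧ T ((sawtooth i).comp χ • g) y = n • T (χ • g) y := by
  obtain ⟨i, n, hn, hconst⟩ := exists_sawtooth_eventuallyEq ht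
  refine ⟨i, n, hn, ?_⟩
  have hlocal : ⇑((sawtooth i).comp χ • g) =ᶠ[supportFilter T y] ⇑(n • χ • g) := by
    filter_upwards [hχ.eventually hconst] with x hx
    simp [ContinuousMap.smul_apply', hx, mul_smul, Nat.cast_smul_eq_nsmul]
  simpa [map_nsmul T] using apply_eq_of_eventuallyEq_supportFilter hlocal

end SupportFilter

section Separating

variable {X Y E F G : Type} [TopologicalSpace X] [TopologicalSpace Y]
  [NormedAddCommGroup E] [NormedAddCommGroup F]

lemma SeparatingC.eq_zero_or_eq_zero {T : C(X, E) → C(Y, F)} (hT : SeparatingC T)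
    {f g : C(X, E)} (h : ∀ x, f x = 0 ∨ g x = 0) (y : Y) : T f y = 0 ∨ T g y = 0 := by
  simpa using hT f g (by simpa using h) y

variable [NormedSpace ℝ E] [FunLike G C(X, E) C(Y, F)] [AddMonoidHomClass G C(X, E) C(Y, F)]
  {T : G} {y : Y}

lemma SeparatingC.eventually_lt_or_eventually_gt (hT : SeparatingC ⇑T) (y : Y) (φ : C(X, ℝ))
    {a b : ℝ} (hab : a < b) :
    (∀ᶠ x in supportFilter T y, φ x < b) ∨ ∀ᶠ x in supportFilter T y, a < φ x := by
  obtain ⟨c, hac, hcb⟩ := exists_between hab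
  obtain ⟨α, hα0, hα1⟩ := exists_continuous_cutoff φ hcb
  obtain ⟨β, hβ0, hβ1⟩ := exists_continuous_cutoff φ hac
  by_cases h : ∀ f : C(X, E), T (α • f) y = 0
  · exact .inl ⟨α, fun x hx => hα1 x (not_lt.1 hx), h⟩
  · push Not at h
    obtain ⟨f, hf⟩ := h
    refine .inr ⟨1 - β, fun x hx => by simp [hβ0 x (not_lt.1 hx)], fun g => ?_⟩
    refine (hT.eq_zero_or_eq_zero (fun x => ?_) y).resolve_left hf
    rcases le_total (φ x) c with hx | hx
    · exact .inl (by simp [ContinuousMap.smul_apply', hα0 x hx])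
    · exact .inr (by simp [ContinuousMap.smul_apply', hβ1 x hx])

lemma SeparatingC.exists_tendsto_of_eventually_abs_le (hT : SeparatingC ⇑T) {φ : C(X, ℝ)} {M : ℝ}
    (hφ : ∀ᶠ x in supportFilter T y, |φ x| ≤ M) :
    ∃ c, Tendsto φ (supportFilter T y) (𝓝 c) := by
  refine tendsto_of_no_upcrossings dense_univ ?_
    (isBoundedUnder_of_eventually_le (hφ.mono fun x hx => (abs_le.1 hx).2))
    (isBoundedUnder_of_eventually_ge (hφ.mono fun x hx => (abs_le.1 hx).1))
  rintro a - b - hab ⟨hlt, hgt⟩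
  rcases hT.eventually_lt_or_eventually_gt y φ hab with h | h
  · exact hgt (h.mono fun x hx => hx.not_gt)
  · exact hlt (h.mono fun x hx => hx.not_gt)

lemma SeparatingC.eventually_nhds_eventually_lt (hT : SeparatingC ⇑T) {f : C(X, E)}
    (hf : T f y ≠ 0) {φ : C(X, ℝ)} {a b : ℝ} (hab : a < b)
    (hφ : ∀ᶠ x in supportFilter T y, φ x < a) :
    ∀ᶠ z in 𝓝 y, ∀ᶠ x in supportFilter T z, φ x < b := by
  obtain ⟨c, hac, hcb⟩ := exists_between hab
  obtain ⟨τ, hτ0, hτ1⟩ := exists_continuous_cutoff φ hac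
  have hy : T ((1 - τ) • f) y ≠ 0 := by
    rwa [apply_eq_of_eventuallyEq_supportFilter (g := f)]
    filter_upwards [hφ] with x hx
    simp [ContinuousMap.smul_apply', hτ0 x hx.le]
  filter_upwards [(T ((1 - τ) • f)).continuous.continuousAt.eventually_ne hy] with z hz
  refine (hT.eventually_lt_or_eventually_gt z φ hcb).resolve_right fun h => hz ?_
  refine apply_eq_zero_of_eventually_supportFilter ?_
  filter_upwards [h] with x hx
  simp [ContinuousMap.smul_apply', hτ1 x hx.le]

end Separating

section SupportPoint

variable {X Y E F : Type} [TopologicalSpace X] [TopologicalSpace Y]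
  [NormedAddCommGroup E] [NormedAddCommGroup F]

/-- `x` is a support point of `T` at `y` if `T f y = 0` for every `f` vanishing at `x`, so that
for additive `T` the value `T f y` depends only on `f x`. -/
def IsSupportPoint (T : C(X, E) → C(Y, F)) (y : Y) (x : X) : Prop :=
  ∀ f : C(X, E), f x = 0 → T f y = 0

lemma IsSupportPoint.apply_const {G : Type*} [FunLike G C(X, E) C(Y, F)]
    [AddMonoidHomClass G C(X, E) C(Y, F)] {T : G} {y : Y} {x : X}
    (h : IsSupportPoint T y x) (f : C(X, E)) : T (.const X (f x)) y = T f y := by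
  simpa [map_sub T, sub_eq_zero] using h (.const X (f x) - f) (by simp)

lemma IsSupportPoint.bijective_apply_const {T : C(X, E) ≃+ C(Y, F)} {y y' : Y} {x : X}
    (h : IsSupportPoint T y x) (h' : IsSupportPoint T.symm x y') :
    Function.Bijective fun e : E => T (.const X e) y := by
  have happly (g : C(Y, F)) : g y' = g y := by
    simpa [sub_eq_zero] using h _ (h' (.const Y (g y') - g) (by simp))
  refine ⟨fun a b hab => ?_, fun v => ⟨T.symm (.const Y v) x, by simp [h.apply_const]⟩⟩
  have hzero : T (.const X a - .const X b) y' = 0 := by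
    rw [happly]
    simpa [sub_eq_zero] using hab
  simpa [sub_eq_zero] using h' _ hzero

lemma SeparatingC.exists_apply_ne_zero_and_disjoint [NormedSpace ℝ F]
    [CompletelyRegularSpace Y] [Nontrivial F] {T : C(X, E) ≃+ C(Y, F)} {y : Y}
    (hT' : SeparatingC ⇑T.symm) {W : Set Y} (hW : W ∈ 𝓝 y) :
    ∃ k : C(X, E), T k y ≠ 0 ∧
      ∀ f : C(X, E), (∀ z ∈ W, T f z = 0) → ∀ x, f x = 0 ∨ k x = 0 := by
  obtain ⟨v, hv⟩ := exists_ne (0 : F)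
  obtain ⟨χ, hχy, hχW⟩ := exists_continuous_one_of_mem_nhds hW
  refine ⟨T.symm (χ • .const Y v), by simpa [ContinuousMap.smul_apply', hχy] using hv,
    fun f hf x => ?_⟩
  have hdisj (z : Y) : T f z = 0 ∨ (χ • ContinuousMap.const Y v) z = 0 := by
    by_cases hz : z ∈ W
    · exact .inl (hf z hz)
    · exact .inr (by simp [ContinuousMap.smul_apply', hχW z hz])
  simpa using hT'.eq_zero_or_eq_zero hdisj x

variable [NormedSpace ℝ E] [NormedSpace ℝ F] {T : C(X, E) ≃+ C(Y, F)} {y : Y}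

lemma SeparatingC.apply_smul_eq_zero_of_eventually_tendsto [CompletelyRegularSpace Y]
    [Nontrivial F] (hT : SeparatingC ⇑T) (hT' : SeparatingC ⇑T.symm) {χ : C(X, ℝ)}
    (hχ : ∀ᶠ z in 𝓝 y, Tendsto χ (supportFilter T z) (𝓝 0)) (g : C(X, E)) :
    T (χ • g) y = 0 := by
  obtain ⟨k, hk, hdisj⟩ := hT'.exists_apply_ne_zero_and_disjoint hχ
  have hχk (x : X) : χ x = 0 ∨ k x = 0 := by
    refine or_iff_not_imp_left.2 fun hx => ?_
    have hpos : 0 < |χ x| := abs_pos.2 hx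
    obtain ⟨τ, hτ0, hτ1⟩ := exists_continuous_cutoff ⟨fun x => |χ x|, by fun_prop⟩
      (half_lt_self hpos)
    have hvanish : ∀ z ∈ {z | Tendsto χ (supportFilter T z) (𝓝 0)}, T (τ • k) z = 0 := by
      intro z hz
      refine apply_eq_zero_of_eventually_supportFilter ?_
      have habs : Tendsto (fun x => |χ x|) (supportFilter T z) (𝓝 0) := by simpa using hz.abs
      filter_upwards [habs.eventually_lt_const (half_pos hpos)] with x' hx'
      simp [ContinuousMap.smul_apply', hτ0 x' hx'.le]
    simpa [ContinuousMap.smul_apply', hτ1 x le_rfl] using hdisj _ hvanish x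
  refine (hT.eq_zero_or_eq_zero (fun x => ?_) y).resolve_right hk
  exact (hχk x).imp_left fun hx => by simp [ContinuousMap.smul_apply', hx]

lemma SeparatingC.apply_smul_eq_zero_of_tendsto [CompletelyRegularSpace Y] [Nontrivial F]
    (hT : SeparatingC ⇑T) (hT' : SeparatingC ⇑T.symm) {χ : C(X, ℝ)} (hχ0 : ∀ x, 0 ≤ χ x)
    (hχ : Tendsto χ (supportFilter T y) (𝓝 0)) (g : C(X, E)) : T (χ • g) y = 0 := by
  by_contra hne
  refine hne (eq_zero_of_forall_frequently_nsmul (T (χ • g)).continuous.continuousAt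
    (u := fun i => T ((sawtooth i).comp χ • g)) (fun i => by fun_prop) fun N => ?_)
  have hN : (0 : ℝ) < (N + 1 : ℝ)⁻¹ := by positivity
  have hsmall : ∀ᶠ z in 𝓝 y, ∀ᶠ x in supportFilter T z, χ x < (N + 1 : ℝ)⁻¹ :=
    hT.eventually_nhds_eventually_lt hne (half_lt_self hN)
      (hχ.eventually_lt_const (half_pos hN))
  have hpos : ∃ᶠ z in 𝓝 y, ¬ Tendsto χ (supportFilter T z) (𝓝 0) := fun h =>
    hne (hT.apply_smul_eq_zero_of_eventually_tendsto hT'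
      (h.mono fun z hz => not_not.1 hz) g)
  refine ((hpos.and_eventually hsmall).and_eventually
    ((T (χ • g)).continuous.continuousAt.eventually_ne hne)).mono ?_
  rintro z ⟨⟨hz0, hzN⟩, hzne⟩
  have := supportFilter_neBot hzne
  obtain ⟨c, hc⟩ : ∃ c, Tendsto χ (supportFilter T z) (𝓝 c) :=
    hT.exists_tendsto_of_eventually_abs_le
      (hzN.mono fun x hx => (abs_of_nonneg (hχ0 x)).trans_le hx.le)
  have hc0 : 0 < c := (ge_of_tendsto hc (.of_forall hχ0)).lt_of_ne
    fun h => hz0 (h ▸ hc)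
  have hcN : c ≤ (N + 1 : ℝ)⁻¹ := le_of_tendsto hc (hzN.mono fun x hx => hx.le)
  obtain ⟨i, n, hn, hi⟩ := exists_apply_sawtooth_comp_smul_eq_nsmul hc0 hc g
  refine ⟨i, n, ?_, hi⟩
  have hNn : (N + 1 : ℝ) ≤ n := ((le_inv_comm₀ (by positivity) hc0).2 hcN).trans hn
  exact_mod_cast (lt_add_one (N : ℝ)).le.trans hNn

lemma SeparatingC.not_tendsto_atTop [CompletelyRegularSpace Y] [Nontrivial F]
    (hT : SeparatingC ⇑T) (hT' : SeparatingC ⇑T.symm) {φ : C(X, ℝ)} (hφ : ∀ x, 0 ≤ φ x) :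
    ¬ Tendsto φ (supportFilter T y) atTop := by
  intro htop
  have hpos (x : X) : 0 < 1 + φ x := add_pos_of_pos_of_nonneg one_pos (hφ x)
  let χ : C(X, ℝ) := ⟨fun x => (1 + φ x)⁻¹,
    (by fun_prop : Continuous fun x => 1 + φ x).inv₀ fun x => (hpos x).ne'⟩
  have hχ : Tendsto χ (supportFilter T y) (𝓝 0) :=
    tendsto_inv_atTop_zero.comp (tendsto_atTop_add_const_left _ 1 htop)
  obtain ⟨v, hv⟩ := exists_ne (0 : F)
  have hfactor : χ • (1 + φ) • T.symm (.const Y v) = T.symm (.const Y v) := by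
    ext x
    exact inv_smul_smul₀ (hpos x).ne' _
  refine hv ?_
  simpa [hfactor] using hT.apply_smul_eq_zero_of_tendsto hT'
    (fun x => (inv_pos.2 (hpos x)).le) hχ ((1 + φ) • T.symm (.const Y v))

lemma SeparatingC.exists_tendsto [CompletelyRegularSpace Y] [Nontrivial F] (hT : SeparatingC ⇑T)
    (hT' : SeparatingC ⇑T.symm) (y : Y) (φ : C(X, ℝ)) :
    ∃ c, Tendsto φ (supportFilter T y) (𝓝 c) := by
  let absφ : C(X, ℝ) := ⟨fun x => |φ x|, by fun_prop⟩
  by_cases hbdd : ∃ M, ∀ᶠ x in supportFilter T y, absφ x < M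
  · obtain ⟨M, hM⟩ := hbdd
    exact hT.exists_tendsto_of_eventually_abs_le (hM.mono fun x hx => hx.le)
  · refine absurd (tendsto_atTop.2 fun M => ?_)
      (hT.not_tendsto_atTop (y := y) (φ := absφ) hT' fun x => abs_nonneg _)
    have hgt := (hT.eventually_lt_or_eventually_gt y absφ (lt_add_one M)).resolve_left
      fun h => hbdd ⟨_, h⟩
    exact hgt.mono fun x hx => hx.le

lemma SeparatingC.exists_supportFilter_le_nhds [CompletelyRegularSpace Y] [Nontrivial F]
    (hX : Realcompact X) (hT : SeparatingC ⇑T) (hT' : SeparatingC ⇑T.symm) (y : Y) :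
    ∃ x, supportFilter T y ≤ 𝓝 x := by
  obtain ⟨v, hv⟩ := exists_ne (0 : F)
  have : (supportFilter T y).NeBot :=
    supportFilter_neBot (f := T.symm (.const Y v)) (by simpa using hv)
  obtain ⟨ι, e, he⟩ := hX
  have hcoord (i : ι) : ∃ c, Tendsto (fun x => e x i) (supportFilter T y) (𝓝 c) :=
    hT.exists_tendsto hT' y ⟨fun x => e x i, (continuous_apply i).comp he.continuous⟩
  choose c hc using hcoord
  have hlim : Tendsto e (supportFilter T y) (𝓝 c) := tendsto_pi_nhds.2 hc
  obtain ⟨x, rfl⟩ : c ∈ Set.range e :=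
    he.isClosed_range.mem_of_tendsto hlim (.of_forall Set.mem_range_self)
  refine ⟨x, ?_⟩
  rw [he.isInducing.nhds_eq_comap]
  exact hlim.le_comap

lemma SeparatingC.isSupportPoint_of_supportFilter_le_nhds [CompletelyRegularSpace Y]
    [Nontrivial F] (hT : SeparatingC ⇑T) (hT' : SeparatingC ⇑T.symm) {x : X}
    (hx : supportFilter T y ≤ 𝓝 x) : IsSupportPoint T y x := by
  intro f hf
  let χ : C(X, ℝ) := ⟨fun x => √‖f x‖, by fun_prop⟩
  let g : C(X, E) := ⟨fun x => (√‖f x‖)⁻¹ • f x,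
    (continuous_inv_sqrt_norm_smul E).comp f.continuous⟩
  have hfactor : χ • g = f := by
    ext x
    by_cases hfx : f x = 0
    · simp [ContinuousMap.smul_apply', g, hfx]
    · exact smul_inv_smul₀ (Real.sqrt_ne_zero'.2 (norm_pos_iff.2 hfx)) _
  have hχ : Tendsto χ (supportFilter T y) (𝓝 0) := by
    simpa [χ, hf] using (χ.continuous.tendsto x).mono_left hx
  rw [← hfactor]
  exact hT.apply_smul_eq_zero_of_tendsto hT' (fun x => Real.sqrt_nonneg _) hχ g

lemma SeparatingC.exists_isSupportPoint [CompletelyRegularSpace Y] [Nontrivial F]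
    (hX : Realcompact X) (hT : SeparatingC ⇑T) (hT' : SeparatingC ⇑T.symm) (y : Y) :
    ∃ x, IsSupportPoint T y x :=
  (hT.exists_supportFilter_le_nhds hX hT' y).imp fun _ hx =>
    hT.isSupportPoint_of_supportFilter_le_nhds hT' hx

theorem SeparatingC.bijective_apply_const [CompletelyRegularSpace X] [CompletelyRegularSpace Y]
    [Nontrivial E] [Nontrivial F] (hX : Realcompact X) (hY : Realcompact Y)
    (hT : SeparatingC ⇑T) (hT' : SeparatingC ⇑T.symm) (y : Y) :
    Function.Bijective fun e : E => T (.const X e) y := by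
  obtain ⟨x, hx⟩ := hT.exists_isSupportPoint hX hT' y
  obtain ⟨y', hy'⟩ := hT'.exists_isSupportPoint hY (by simpa using hT) x
  exact hx.bijective_apply_const hy'

end SupportPoint

/-- For each `y`, the map `J_y : e ↦ (T ê)(y)` (where `ê` is the constant function with
value `e`) is a continuous linear bijection from `E` onto `F`, and `y ↦ J_y` is continuous
into the strong operator topology, i.e. `y ↦ J_y e` is continuous for each `e`. -/
theorem stmt7 {𝕂 X Y E F : Type} [RCLike 𝕂]
    [TopologicalSpace X] [CompletelyRegularSpace X] [T2Space X]
    [TopologicalSpace Y] [CompletelyRegularSpace Y] [T2Space Y]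
    [NormedAddCommGroup E] [NormedSpace 𝕂 E] [Nontrivial E] [FiniteDimensional 𝕂 E]
    [NormedAddCommGroup F] [NormedSpace 𝕂 F] [Nontrivial F]
    (hX : Realcompact X) (hY : Realcompact Y)
    (T : C(X, E) ≃ₗ[𝕂] C(Y, F)) (hT : SeparatingC ⇑T) (hT' : SeparatingC ⇑T.symm)
    (J : Y → E → F) (hJ : ∀ (y : Y) (e : E), J y e = T (ContinuousMap.const X e) y) :
    (∀ y : Y, IsLinearMap 𝕂 (J y)) ∧ (∀ y : Y, Continuous (J y)) ∧
      (∀ y : Y, Function.Bijective (J y)) ∧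
      (∀ e : E, Continuous fun y : Y => J y e) := by
  let := NormedSpace.restrictScalars ℝ 𝕂 E
  let := NormedSpace.restrictScalars ℝ 𝕂 F
  have hlin (y : Y) : IsLinearMap 𝕂 (J y) := by
    constructor <;> intros <;> simp only [hJ]
    · exact DFunLike.congr_fun (map_add T (.const X _) (.const X _)) y
    · exact DFunLike.congr_fun (map_smul T _ (.const X _)) y
  refine ⟨hlin, fun y => ((hlin y).mk' (J y)).continuous_of_finiteDimensional, fun y => ?_,
    fun e => ?_⟩
  · rw [funext (hJ y)]
    exact SeparatingC.bijective_apply_const (T := T.toAddEquiv) hX hY hT hT' y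
  · simp only [hJ]
    exact (T (.const X e)).continuous
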